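/- Let k ≥ 2 be an integer and let α > 1/k and r > 0 be real constants such that p_cr := 1 - e^{-α/r} satisfies p_cr ≤ (k-1)/k. For a random instance P drawn from RB(k,n,α,r,p) with constant p ∈ (0,1), the probability that P is satisfiable tends, as n → ∞, to 1 if p < p_cr and to 0 if p > p_cr. -/

import Mathlib

namespace RB

/-- A (raw) constraint over `n` variables with common domain `Fin d`:
a scope (set of variables) together with a set of forbidden tuples,
i.e. forbidden functions from the scope to the domain. -/
abbrev Constraint (n d : ℕ) : Type := Σ s : Finset (Fin n), Finset (↥s → Fin d)

/-- A constraint of model RB: scope of exactly `k` variables and exactly `q` forbidden tuples. -/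
abbrev ValidConstraint (k n d q : ℕ) : Type :=
  {c : Constraint n d // c.1.card = k ∧ c.2.card = q}

/-- An instance of model RB: a sequence of `m` constraints (chosen with repetition). -/
abbrev Instance (k n d q m : ℕ) : Type := Fin m → ValidConstraint k n d q

/-- An assignment satisfies a constraint iff the tuple it induces on the scope is not forbidden. -/
def satisfies {n d : ℕ} (a : Fin n → Fin d) (c : Constraint n d) : Prop :=
  (fun i : ↥c.1 => a i.1) ∉ c.2

/-- An assignment satisfies an instance iff it satisfies all its constraints. -/
def satInstance {k n d q m : ℕ} (a : Fin n → Fin d) (P : Instance k n d q m) : Prop :=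
  ∀ i : Fin m, satisfies a (P i).1

open scoped Classical in
/-- The probability (uniform over instances, i.e. constraints chosen independently,
uniformly and with repetition) that a random instance is satisfiable. -/
noncomputable def prSat (k n d q m : ℕ) : ℝ :=
  ((Finset.univ.filter fun P : Instance k n d q m =>
      ∃ a : Fin n → Fin d, satInstance a P).card : ℝ)
    / (Fintype.card (Instance k n d q m))

/-- Domain size `d = ⌈n^α⌉`. -/
noncomputable def dOf (α : ℝ) (n : ℕ) : ℕ := ⌈(n : ℝ) ^ α⌉₊

/-- Number of constraints `m = ⌈r · n · ln n⌉`. -/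
noncomputable def mOf (r : ℝ) (n : ℕ) : ℕ := ⌈r * n * Real.log n⌉₊

/-- Number of forbidden tuples `q = ⌈p · d^k⌉`. -/
noncomputable def qOf (p : ℝ) (k d : ℕ) : ℕ := ⌈p * (d : ℝ) ^ k⌉₊

/-- Probability that a random instance of `RB(k,n,α,r,p)` is satisfiable. -/
noncomputable def prSatRB (k : ℕ) (α r p : ℝ) (n : ℕ) : ℝ :=
  prSat k n (dOf α n) (qOf p k (dOf α n)) (mOf r n)

end RB

namespace RB

open scoped Classical in
lemma card_filter_valid (k n d q : ℕ) (Q : Constraint n d → Prop) :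
    (Finset.univ.filter fun c : ValidConstraint k n d q => Q c.1).card =
    ∑ s ∈ Finset.powersetCard k (Finset.univ : Finset (Fin n)),
      ((Finset.powersetCard q (Finset.univ : Finset (↥s → Fin d))).filter
        (fun t => Q ⟨s, t⟩)).card := by
  rw [← Finset.card_sigma]
  refine Finset.card_bij (fun c _ => c.1) ?_ ?_ ?_
  · rintro ⟨⟨s, t⟩, h1, h2⟩ h
    simp at h h1 h2 ⊢
    exact ⟨h1, h2, h⟩
  · rintro a _ b _ h
    exact Subtype.ext h
  · rintro ⟨s, t⟩ h
    simp at h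
    exact ⟨⟨⟨s, t⟩, h.1, h.2.1⟩, by simpa using h.2.2, rfl⟩

lemma card_tuples {k n d : ℕ} {s : Finset (Fin n)} (hs : s.card = k) :
    (Finset.univ : Finset (↥s → Fin d)).card = d ^ k := by
  simp [hs]

open scoped Classical in
lemma card_valid (k n d q : ℕ) :
    Fintype.card (ValidConstraint k n d q) = n.choose k * (d ^ k).choose q := by
  have h := card_filter_valid k n d q (fun _ => True)
  simp only [Finset.filter_true] at h
  rw [← Finset.card_univ, h]
  rw [Finset.sum_congr rfl (g := fun _ => (d ^ k).choose q)]
  · simp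
  · intro s hs
    rw [Finset.card_powersetCard, card_tuples (Finset.mem_powersetCard.1 hs).2]

open scoped Classical in
lemma card_sat1 (k n d q : ℕ) (a : Fin n → Fin d) :
    (Finset.univ.filter fun c : ValidConstraint k n d q => satisfies a c.1).card
      = n.choose k * (d ^ k - 1).choose q := by
  rw [card_filter_valid k n d q (fun c => satisfies a c)]
  rw [Finset.sum_congr rfl (g := fun _ => (d ^ k - 1).choose q)]
  · simp
  · intro s hs
    rw [← card_tuples (d := d) (Finset.mem_powersetCard.1 hs).2,
      ← Finset.card_erase_of_mem (Finset.mem_univ (fun i : ↥s => a i.1)),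
      ← Finset.card_powersetCard]
    congr 1
    ext t
    rw [Finset.mem_filter]
    simp only [Finset.mem_powersetCard, satisfies, Finset.subset_erase]
    tauto

/-- agreement set -/
def agr {n d : ℕ} (a b : Fin n → Fin d) : Finset (Fin n) :=
  Finset.univ.filter fun i => a i = b i

open scoped Classical in
lemma card_sat2 (k n d q : ℕ) (a b : Fin n → Fin d) :
    (Finset.univ.filter fun c : ValidConstraint k n d q =>
        satisfies a c.1 ∧ satisfies b c.1).card
      = (agr a b).card.choose k * (d ^ k - 1).choose q +
        (n.choose k - (agr a b).card.choose k) * (d ^ k - 2).choose q := by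
  have key : (Finset.univ.filter fun c : ValidConstraint k n d q =>
        satisfies a c.1 ∧ satisfies b c.1).card =
      ∑ s ∈ Finset.powersetCard k (Finset.univ : Finset (Fin n)),
      ((Finset.powersetCard q (Finset.univ : Finset (↥s → Fin d))).filter
        (fun t => satisfies a ⟨s, t⟩ ∧ satisfies b ⟨s, t⟩)).card := by
    convert card_filter_valid k n d q (fun c => satisfies a c ∧ satisfies b c)
  rw [key]
  have hsub : Finset.powersetCard k (agr a b) ⊆ Finset.powersetCard k Finset.univ :=
    Finset.powersetCard_mono (Finset.subset_univ _)
  rw [← Finset.sum_sdiff hsub, add_comm]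
  congr 1
  · rw [Finset.sum_congr rfl (g := fun _ => (d ^ k - 1).choose q)]
    · simp
    · intro s hs
      obtain ⟨h1, h2⟩ := Finset.mem_powersetCard.1 hs
      have hab : (fun i : ↥s => a i.1) = (fun i : ↥s => b i.1) := by
        ext i
        have := h1 i.2
        simp [agr] at this
        simp [this]
      rw [← card_tuples (d := d) h2,
        ← Finset.card_erase_of_mem (Finset.mem_univ (fun i : ↥s => a i.1)),
        ← Finset.card_powersetCard]
      congr 1
      ext t
      rw [Finset.mem_filter]
      simp only [Finset.mem_powersetCard, satisfies, Finset.subset_erase, ← hab]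
      tauto
  · rw [Finset.sum_congr rfl (g := fun _ => (d ^ k - 2).choose q)]
    · simp [Finset.card_sdiff_of_subset hsub]
    · intro s hs
      rw [Finset.mem_sdiff, Finset.mem_powersetCard, Finset.mem_powersetCard] at hs
      obtain ⟨⟨_, h2⟩, h3⟩ := hs
      have hab : (fun i : ↥s => b i.1) ≠ (fun i : ↥s => a i.1) := by
        intro h
        apply h3
        refine ⟨fun i hi => ?_, h2⟩
        have := congrFun h ⟨i, hi⟩
        simp [agr]
        exact this.symm
      have hm : (fun i : ↥s => b i.1) ∈ Finset.univ.erase (fun i : ↥s => a i.1) :=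
        Finset.mem_erase.2 ⟨hab, Finset.mem_univ _⟩
      have hc : ((Finset.univ.erase (fun i : ↥s => a i.1)).erase (fun i : ↥s => b i.1)).card
          = d ^ k - 2 := by
        rw [Finset.card_erase_of_mem hm, Finset.card_erase_of_mem (Finset.mem_univ _),
          card_tuples h2]
        omega
      rw [← hc, ← Finset.card_powersetCard]
      congr 1
      ext t
      rw [Finset.mem_filter]
      simp only [Finset.mem_powersetCard, satisfies, Finset.subset_erase]
      tauto

open scoped Classical in
/-- number of solutions -/
noncomputable def nSol {k n d q m : ℕ} (P : Instance k n d q m) : ℕ :=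
  (Finset.univ.filter fun a : Fin n → Fin d => satInstance a P).card

open scoped Classical in
lemma card_forall {V : Type*} [Fintype V] (m : ℕ) (Q : V → Prop) :
    (Finset.univ.filter fun P : Fin m → V => ∀ i, Q (P i)).card =
      (Finset.univ.filter Q).card ^ m := by
  rw [← Fintype.card_piFinset_const]
  congr 1
  ext P
  simp [Fintype.mem_piFinset]

open scoped Classical in
lemma sum_nSol (k n d q m : ℕ) :
    ∑ P : Instance k n d q m, nSol P = d ^ n * (n.choose k * (d ^ k - 1).choose q) ^ m := by
  simp only [nSol, Finset.card_filter]
  rw [Finset.sum_comm]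
  simp only [← Finset.card_filter]
  rw [Finset.sum_congr rfl (g := fun _ => (n.choose k * (d ^ k - 1).choose q) ^ m)]
  · simp
  · intro a _
    rw [← card_sat1 k n d q a]
    refine Eq.trans ?_ (card_forall m (fun c : ValidConstraint k n d q => satisfies a c.1))
    unfold satInstance
    congr

open scoped Classical in
lemma sum_nSol_sq (k n d q m : ℕ) :
    ∑ P : Instance k n d q m, (nSol P) ^ 2 =
      ∑ a : Fin n → Fin d, ∑ b : Fin n → Fin d,
        ((agr a b).card.choose k * (d ^ k - 1).choose q +
        (n.choose k - (agr a b).card.choose k) * (d ^ k - 2).choose q) ^ m := by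
  have h : ∀ P : Instance k n d q m, (nSol P) ^ 2 =
      ∑ a : Fin n → Fin d, ∑ b : Fin n → Fin d,
        if satInstance a P ∧ satInstance b P then 1 else 0 := by
    intro P
    simp only [nSol, Finset.card_filter, sq, Finset.sum_mul_sum]
    refine Finset.sum_congr rfl fun a _ => Finset.sum_congr rfl fun b _ => ?_
    by_cases h1 : satInstance a P <;> by_cases h2 : satInstance b P <;> simp [h1, h2]
  simp only [h]
  rw [Finset.sum_comm]
  refine Finset.sum_congr rfl fun a _ => ?_
  rw [Finset.sum_comm]
  refine Finset.sum_congr rfl fun b _ => ?_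
  rw [← card_sat2 k n d q a b]
  refine Eq.trans ?_ (Eq.trans (card_forall m (fun c : ValidConstraint k n d q =>
    satisfies a c.1 ∧ satisfies b c.1)) (by congr))
  rw [Finset.card_filter]
  refine Finset.sum_congr rfl fun P _ => ?_
  simp only [satInstance, forall_and]
  congr

lemma nSol_pos {k n d q m : ℕ} (P : Instance k n d q m) :
    (∃ a : Fin n → Fin d, satInstance a P) ↔ 0 < nSol P := by
  classical
  simp [nSol, Finset.card_pos, Finset.Nonempty]

open scoped Classical in
lemma card_sat_le (k n d q m : ℕ) :
    (Finset.univ.filter fun P : Instance k n d q m =>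
      ∃ a : Fin n → Fin d, satInstance a P).card ≤ ∑ P : Instance k n d q m, nSol P := by
  rw [Finset.card_filter]
  refine Finset.sum_le_sum fun P _ => ?_
  split_ifs with h
  · exact (nSol_pos P).1 h
  · exact Nat.zero_le _

open scoped Classical in
lemma cauchy (k n d q m : ℕ) :
    (∑ P : Instance k n d q m, nSol P) ^ 2 ≤
    (Finset.univ.filter fun P : Instance k n d q m =>
      ∃ a : Fin n → Fin d, satInstance a P).card * ∑ P : Instance k n d q m, (nSol P) ^ 2 := by
  have h := Finset.sum_mul_sq_le_sq_mul_sq (R := ℕ) Finset.univ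
    (fun P : Instance k n d q m => if ∃ a : Fin n → Fin d, satInstance a P then 1 else 0)
    (fun P => nSol P)
  rw [Finset.card_filter]
  have e1 : ∀ P : Instance k n d q m,
      (if ∃ a : Fin n → Fin d, satInstance a P then 1 else 0) * nSol P = nSol P := by
    intro P
    split_ifs with h
    · simp
    · rw [nSol_pos] at h
      omega
  have e2 : ∀ P : Instance k n d q m,
      (if ∃ a : Fin n → Fin d, satInstance a P then 1 else 0) ^ 2 =
      (if ∃ a : Fin n → Fin d, satInstance a P then 1 else 0) := by
    intro P
    split_ifs <;> simp
  simp only [e1, e2] at h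
  exact h

end RB
namespace RB

lemma choose_ratio1 (D q : ℕ) (hD : 1 ≤ D) (hq : q ≤ D) :
    ((D - 1).choose q : ℝ) = (1 - (q : ℝ) / D) * D.choose q := by
  obtain ⟨E, rfl⟩ : ∃ E, D = E + 1 := ⟨D - 1, by omega⟩
  have h := Nat.choose_mul_succ_eq E q
  have h' : ((E.choose q : ℝ)) * ((E : ℝ) + 1) = (E + 1).choose q * ((E : ℝ) + 1 - q) := by
    have := congrArg (fun x : ℕ => (x : ℝ)) h
    rw [Nat.cast_mul, Nat.cast_mul, Nat.cast_sub hq] at this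
    push_cast at this
    exact this
  have hE : (0 : ℝ) < (E : ℝ) + 1 := by positivity
  simp only [Nat.add_sub_cancel]
  push_cast
  field_simp
  linarith

lemma choose_ratio2 (D q : ℕ) (hD : 2 ≤ D) (hq : q < D) :
    ((D - 2).choose q : ℝ) ≤ (1 - (q : ℝ) / D) ^ 2 * D.choose q := by
  have h1 := choose_ratio1 D q (by omega) hq.le
  have h2 := choose_ratio1 (D - 1) q (by omega) (by omega)
  have e : D - 1 - 1 = D - 2 := by omega
  rw [e] at h2
  rw [h2, h1, sq, mul_assoc]
  have hD' : (0 : ℝ) < D := by exact_mod_cast (by omega : 0 < D)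
  have hD1 : (0 : ℝ) < ((D - 1 : ℕ) : ℝ) := by exact_mod_cast (by omega : 0 < D - 1)
  have hw : 0 ≤ 1 - (q : ℝ) / D := by
    rw [sub_nonneg, div_le_one hD']
    exact_mod_cast hq.le
  have hle : (q : ℝ) / D ≤ (q : ℝ) / ((D - 1 : ℕ) : ℝ) := by
    apply div_le_div_of_nonneg_left (by positivity) hD1
    exact_mod_cast (by omega : D - 1 ≤ D)
  apply mul_le_mul_of_nonneg_right (by linarith)
  positivity

lemma desc_ratio (s n k : ℕ) (h : s ≤ n) :
    s.descFactorial k * n ^ k ≤ n.descFactorial k * s ^ k := by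
  induction k with
  | zero => simp
  | succ k ih =>
    rw [Nat.descFactorial_succ, Nat.descFactorial_succ, pow_succ, pow_succ]
    have h1 : (s - k) * n ≤ (n - k) * s := by
      rw [Nat.sub_mul, Nat.sub_mul, mul_comm n s]
      exact Nat.sub_le_sub_left (Nat.mul_le_mul_left _ h) _
    calc (s - k) * s.descFactorial k * (n ^ k * n)
        = ((s - k) * n) * (s.descFactorial k * n ^ k) := by ring
      _ ≤ ((n - k) * s) * (n.descFactorial k * s ^ k) := Nat.mul_le_mul h1 ih
      _ = _ := by ring

lemma choose_le_ratio (s n k : ℕ) (h : s ≤ n) (hn : 0 < n) :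
    (s.choose k : ℝ) ≤ n.choose k * ((s : ℝ) / n) ^ k := by
  have h1 := desc_ratio s n k h
  rw [Nat.descFactorial_eq_factorial_mul_choose, Nat.descFactorial_eq_factorial_mul_choose,
    mul_assoc, mul_assoc] at h1
  have h2 := Nat.le_of_mul_le_mul_left h1 (Nat.factorial_pos k)
  have hn' : (0 : ℝ) < n := by exact_mod_cast hn
  rw [div_pow, mul_div_assoc', le_div_iff₀ (by positivity)]
  exact_mod_cast h2

lemma card_agr_fiber {n d : ℕ} (a : Fin n → Fin d) (S : Finset (Fin n)) :
    (Finset.univ.filter fun b : Fin n → Fin d => agr a b = S).card ≤ d ^ (n - S.card) := by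
  classical
  have h : (Finset.univ.filter fun b : Fin n → Fin d => agr a b = S) ⊆
      Fintype.piFinset (fun i => if i ∈ S then {a i} else Finset.univ) := by
    intro b hb
    simp only [Finset.mem_filter, Finset.mem_univ, true_and] at hb
    rw [Fintype.mem_piFinset]
    intro i
    split_ifs with hi
    · rw [← hb] at hi
      simp [agr] at hi
      simp [hi]
    · simp
  refine (Finset.card_le_card h).trans ?_
  rw [Fintype.card_piFinset]
  have : ∀ i : Fin n, (if i ∈ S then ({a i} : Finset (Fin d)) else Finset.univ).card
      = if i ∈ S then 1 else d := by
    intro i; split_ifs <;> simp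
  simp only [this]
  rw [Finset.prod_ite]
  simp only [Finset.prod_const_one, one_mul, Finset.prod_const]
  apply le_of_eq
  congr 1
  rw [Finset.filter_not, Finset.card_sdiff_of_subset (Finset.filter_subset _ _)]
  simp

open scoped Classical in
lemma sum_agr {n d : ℕ} (a : Fin n → Fin d) (G : ℕ → ℝ) (hG : ∀ s, 0 ≤ G s) (M : ℝ)
    (T : ℕ → Prop) (hM : ∀ s, ¬ T s → G s ≤ M) (hM0 : 0 ≤ M) :
    ∑ b : Fin n → Fin d, G (agr a b).card ≤ (d : ℝ) ^ n * M +
      ∑ s ∈ Finset.range (n + 1), if T s then (n.choose s : ℝ) * (d : ℝ) ^ (n - s) * G s else 0 := by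
  set H : ℕ → ℝ := fun s => if T s then G s else 0 with hH
  have hH0 : ∀ s, 0 ≤ H s := by
    intro s; simp only [hH]; split_ifs
    · exact hG s
    · exact le_rfl
  have h1 : ∑ b : Fin n → Fin d, G (agr a b).card ≤
      ∑ b : Fin n → Fin d, (M + H (agr a b).card) := by
    refine Finset.sum_le_sum fun b _ => ?_
    simp only [hH]
    split_ifs with h
    · linarith
    · linarith [hM _ h]
  refine h1.trans ?_
  rw [Finset.sum_add_distrib]
  refine add_le_add (by simp) ?_
  rw [← Finset.sum_fiberwise_of_maps_to (t := (Finset.univ : Finset (Fin n)).powerset)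
    (g := fun b => agr a b) (by simp)]
  calc ∑ S ∈ (Finset.univ : Finset (Fin n)).powerset,
        ∑ b ∈ Finset.univ.filter (fun b : Fin n → Fin d => agr a b = S), H (agr a b).card
      ≤ ∑ S ∈ (Finset.univ : Finset (Fin n)).powerset,
        (fun s => (d : ℝ) ^ (n - s) * H s) S.card := by
        refine Finset.sum_le_sum fun S _ => ?_
        rw [Finset.sum_congr rfl (g := fun _ => H S.card)]
        · rw [Finset.sum_const, nsmul_eq_mul]
          apply mul_le_mul_of_nonneg_right _ (hH0 _)
          exact_mod_cast card_agr_fiber a S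
        · intro b hb
          rw [(Finset.mem_filter.1 hb).2]
    _ = _ := by
        rw [Finset.sum_powerset_apply_card (fun s => (d : ℝ) ^ (n - s) * H s)]
        simp only [Finset.card_univ, Fintype.card_fin, nsmul_eq_mul]
        refine Finset.sum_congr rfl fun s _ => ?_
        simp only [hH]
        split_ifs <;> ring

lemma prSat_le_one (k n d q m : ℕ) : prSat k n d q m ≤ 1 := by
  classical
  unfold prSat
  apply div_le_one_of_le₀ _ (by positivity)
  exact_mod_cast Finset.card_le_univ _

lemma prSat_nonneg (k n d q m : ℕ) : 0 ≤ prSat k n d q m := by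
  unfold prSat
  positivity

lemma card_inst (k n d q m : ℕ) :
    (Fintype.card (Instance k n d q m) : ℝ) =
      ((n.choose k : ℝ) * (d ^ k).choose q) ^ m := by
  rw [Fintype.card_fun, card_valid]
  simp

lemma first_moment (k n d q m : ℕ) (hd : 0 < d) (hk : k ≤ n) (hq : q ≤ d ^ k) :
    prSat k n d q m ≤ (d : ℝ) ^ n * (1 - (q : ℝ) / (d : ℝ) ^ k) ^ m := by
  unfold prSat
  have hW : (0 : ℝ) < (n.choose k : ℝ) * (d ^ k).choose q := by
    have := Nat.choose_pos hk
    have := Nat.choose_pos hq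
    positivity
  rw [card_inst, div_le_iff₀ (by positivity)]
  have h := card_sat_le k n d q m
  rw [sum_nSol] at h
  have h' := (Nat.cast_le (α := ℝ)).2 h
  refine h'.trans (le_of_eq ?_)
  push_cast
  rw [choose_ratio1 (d ^ k) q (Nat.pow_pos hd) hq, mul_assoc, ← mul_pow]
  push_cast
  ring

open scoped Classical in
lemma second_moment (k n d q m : ℕ) (hd : 2 ≤ d) (hk0 : 1 ≤ k) (hk : k ≤ n) (hq : q < d ^ k)
    (c : ℝ) (hc0 : 0 ≤ c) (hc : 1 ≤ (1 + c) * (1 - (q : ℝ) / (d : ℝ) ^ k)) (t : ℝ) (ht : 0 ≤ t) :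
    1 ≤ prSat k n d q m * ((1 + c * (t / n) ^ k) ^ m +
      ∑ s ∈ Finset.range (n + 1), if t < s then
        (n.choose s : ℝ) / (d : ℝ) ^ s * (1 + c * ((s : ℝ) / n) ^ k) ^ m else 0) := by
  set D := d ^ k with hDdef
  set w : ℝ := 1 - (q : ℝ) / (d : ℝ) ^ k with hw
  have hn : 0 < n := by omega
  have hn' : (0 : ℝ) < n := by exact_mod_cast hn
  have hd' : (0 : ℝ) < d := by exact_mod_cast (by omega : 0 < d)
  have hD2 : 2 ≤ D := hd.trans (Nat.le_self_pow (by omega) d)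
  have hwpos : 0 < w := by
    rw [hw, sub_pos, div_lt_one (by positivity)]
    exact_mod_cast hq
  have hCn : (0 : ℝ) < (n.choose k : ℝ) := by exact_mod_cast Nat.choose_pos hk
  have hCD : (0 : ℝ) < (D.choose q : ℝ) := by exact_mod_cast Nat.choose_pos hq.le
  set W : ℝ := (n.choose k : ℝ) * D.choose q with hWdef
  have hW : 0 < W := by positivity
  have r1 : ((D - 1).choose q : ℝ) = w * D.choose q := by
    rw [choose_ratio1 D q (by omega) hq.le, hw, hDdef]; push_cast; rfl
  have r2 : ((D - 2).choose q : ℝ) ≤ w ^ 2 * D.choose q := by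
    have := choose_ratio2 D q hD2 hq
    rw [hw]; rw [hDdef] at this ⊢; push_cast at this ⊢; exact this
  set F : ℕ → ℝ := fun s => (1 + c * ((s : ℝ) / n) ^ k) ^ m with hF
  have hF0 : ∀ s, 0 ≤ F s := fun s => by simp only [hF]; positivity
  set B : ℝ := (1 + c * (t / n) ^ k) ^ m +
      ∑ s ∈ Finset.range (n + 1), if t < s then
        (n.choose s : ℝ) / (d : ℝ) ^ s * (1 + c * ((s : ℝ) / n) ^ k) ^ m else 0 with hB
  have pair : ∀ a b : Fin n → Fin d,
      ((((agr a b).card.choose k * (D - 1).choose q +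
        (n.choose k - (agr a b).card.choose k) * (D - 2).choose q) ^ m : ℕ) : ℝ)
      ≤ (W * w ^ 2) ^ m * F (agr a b).card := by
    intro a b
    have hs : (agr a b).card ≤ n := by simpa using Finset.card_le_univ (agr a b)
    have hcs := choose_le_ratio _ n k hs hn
    have hcs2 : (agr a b).card.choose k ≤ n.choose k := Nat.choose_le_choose k hs
    rw [hF, ← mul_pow]
    push_cast [Nat.cast_sub hcs2]
    apply pow_le_pow_left₀
    · have : (0 : ℝ) ≤ (n.choose k : ℝ) - ((agr a b).card.choose k : ℝ) := by
        rw [sub_nonneg]; exact_mod_cast hcs2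
      positivity
    · have hx : ((agr a b).card.choose k : ℝ) ≤ (n.choose k : ℝ) := by exact_mod_cast hcs2
      set x : ℝ := ((agr a b).card.choose k : ℝ)
      have hx0 : 0 ≤ x := by positivity
      set y : ℝ := ((agr a b).card : ℝ) / n
      rw [r1]
      calc x * (w * D.choose q) + ((n.choose k : ℝ) - x) * ((D - 2).choose q : ℝ)
          ≤ x * (((1 + c) * w) * w * D.choose q)
            + ((n.choose k : ℝ) - x) * (w ^ 2 * D.choose q) := by
            apply add_le_add
            · apply mul_le_mul_of_nonneg_left _ hx0
              apply mul_le_mul_of_nonneg_right _ hCD.le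
              nlinarith
            · exact mul_le_mul_of_nonneg_left r2 (by linarith)
        _ = w ^ 2 * D.choose q * ((n.choose k : ℝ) + c * x) := by ring
        _ ≤ w ^ 2 * D.choose q * ((n.choose k : ℝ) + c * ((n.choose k : ℝ) * y ^ k)) := by
            gcongr
        _ = _ := by rw [hWdef]; ring
  have inner : ∀ a : Fin n → Fin d, ∑ b : Fin n → Fin d, F (agr a b).card ≤ (d : ℝ) ^ n * B := by
    intro a
    refine (sum_agr a F hF0 ((1 + c * (t / n) ^ k) ^ m) (fun s => t < s) ?_ (by positivity)).trans ?_
    · intro s hs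
      rw [not_lt] at hs
      simp only [hF]
      gcongr
    · rw [hB, mul_add, Finset.mul_sum]
      apply le_of_eq
      congr 1
      refine Finset.sum_congr rfl fun s hs => ?_
      have hs' : s ≤ n := by rw [Finset.mem_range] at hs; omega
      split_ifs
      · rw [pow_sub₀ _ hd'.ne' hs']
        simp only [hF]
        field_simp
      · simp
  have hsq : ((∑ P : Instance k n d q m, (nSol P) ^ 2 : ℕ) : ℝ) ≤
      (W * w ^ 2) ^ m * ((d : ℝ) ^ n * ((d : ℝ) ^ n * B)) := by
    rw [sum_nSol_sq]
    rw [Nat.cast_sum]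
    calc _ ≤ ∑ a : Fin n → Fin d, (W * w ^ 2) ^ m * ((d : ℝ) ^ n * B) := by
          refine Finset.sum_le_sum fun a _ => ?_
          rw [Nat.cast_sum]
          calc _ ≤ ∑ b : Fin n → Fin d, (W * w ^ 2) ^ m * F (agr a b).card :=
                Finset.sum_le_sum fun b _ => pair a b
            _ = (W * w ^ 2) ^ m * ∑ b : Fin n → Fin d, F (agr a b).card := by
                rw [Finset.mul_sum]
            _ ≤ _ := by
                apply mul_le_mul_of_nonneg_left (inner a)
                positivity
      _ = _ := by
          rw [Finset.sum_const]
          simp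
          ring_nf
  have hC := (Nat.cast_le (α := ℝ)).2 (cauchy k n d q m)
  rw [Nat.cast_pow, Nat.cast_mul, sum_nSol] at hC
  have e1 : ((d ^ n * (n.choose k * (d ^ k - 1).choose q) ^ m : ℕ) : ℝ) = (d : ℝ) ^ n * (W * w) ^ m := by
    push_cast
    rw [r1, hWdef]
    ring
  rw [e1] at hC
  unfold prSat
  rw [card_inst]
  set X : ℝ := ((Finset.univ.filter fun P : Instance k n d q m =>
      ∃ a : Fin n → Fin d, satInstance a P).card : ℝ)
  have hX : 0 ≤ X := by positivity
  have h3 : ((d : ℝ) ^ n * (W * w) ^ m) ^ 2 ≤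
      X * ((W * w ^ 2) ^ m * ((d : ℝ) ^ n * ((d : ℝ) ^ n * B))) :=
    hC.trans (mul_le_mul_of_nonneg_left hsq hX)
  have h4 : W ^ m ≤ X * B := by
    have hZ : 0 < ((d : ℝ) ^ n) ^ 2 * W ^ m * (w ^ m) ^ 2 := by positivity
    refine le_of_mul_le_mul_left ?_ hZ
    calc _ = ((d : ℝ) ^ n * (W * w) ^ m) ^ 2 := by rw [mul_pow W w m]; ring
      _ ≤ _ := h3
      _ = _ := by rw [mul_pow W (w ^ 2) m]; ring
  rw [div_mul_eq_mul_div, le_div_iff₀ (by positivity), one_mul]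
  exact h4

end RB
namespace RB

lemma pow_ineq (x : ℝ) (hx0 : 0 ≤ x) (hx1 : x ≤ 1) (j : ℕ) :
    (j : ℝ) * x ^ j * (1 - x) ≤ 1 - x ^ j := by
  induction j with
  | zero => simp
  | succ j ih =>
    have h1 : x ^ (j + 1) ≤ x ^ j := pow_le_pow_of_le_one hx0 hx1 (Nat.le_succ j)
    have h2 : ((j : ℝ) + 1) * x ^ (j + 1) * (1 - x) ≤ ((j : ℝ) + 1) * x ^ j * (1 - x) := by
      have : 0 ≤ 1 - x := by linarith
      gcongr
    push_cast
    have h3 : x ^ (j + 1) = x ^ j * x := pow_succ x j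
    nlinarith

lemma log_ineq (k : ℕ) (hk : 2 ≤ k) (c x : ℝ) (hc0 : 0 ≤ c) (hc : c ≤ (k : ℝ) - 1)
    (hx0 : 0 ≤ x) (hx1 : x ≤ 1) :
    Real.log (1 + c * x ^ k) ≤ x * Real.log (1 + c) := by
  obtain ⟨j, rfl⟩ : ∃ j, k = j + 1 := ⟨k - 1, by omega⟩
  push_cast at hc
  have hder : ∀ u : ℝ, 0 ≤ u → HasDerivAt (fun u => x * Real.log (1 + u) -
      Real.log (1 + u * x ^ (j + 1))) (x * (1 / (1 + u)) - x ^ (j + 1) / (1 + u * x ^ (j + 1))) u := by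
    intro u hu
    have h1 : HasDerivAt (fun u : ℝ => 1 + u) 1 u := (hasDerivAt_id u).const_add 1
    have h2 : HasDerivAt (fun u : ℝ => 1 + u * x ^ (j + 1)) (x ^ (j + 1)) u := by
      simpa using ((hasDerivAt_id u).mul_const (x ^ (j + 1))).const_add 1
    exact ((h1.log (by positivity)).const_mul x).sub (h2.log (by positivity))
  have hmono : MonotoneOn (fun u => x * Real.log (1 + u) -
      Real.log (1 + u * x ^ (j + 1))) (Set.Icc 0 c) := by
    apply monotoneOn_of_deriv_nonneg (convex_Icc 0 c)
    · intro u hu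
      exact (hder u hu.1).continuousAt.continuousWithinAt
    · intro u hu
      rw [interior_Icc] at hu
      exact (hder u hu.1.le).differentiableAt.differentiableWithinAt
    · intro u hu
      rw [interior_Icc] at hu
      rw [(hder u hu.1.le).deriv]
      have hu0 : 0 < u := hu.1
      have huj : u ≤ j := by linarith [hu.2]
      rw [sub_nonneg, mul_one_div, div_le_div_iff₀ (by positivity) (by positivity)]
      have hp := pow_ineq x hx0 hx1 j
      have h1 : u * (x ^ j * (1 - x)) ≤ j * (x ^ j * (1 - x)) := by
        apply mul_le_mul_of_nonneg_right huj
        have : 0 ≤ 1 - x := by linarith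
        positivity
      have h2 : x ^ j * (1 + u) ≤ 1 + u * (x ^ j * x) := by nlinarith
      rw [pow_succ]
      nlinarith [mul_le_mul_of_nonneg_left h2 hx0]
  have := hmono (Set.left_mem_Icc.2 hc0) (Set.right_mem_Icc.2 hc0) hc0
  simp at this
  linarith

lemma choose_exp (n s : ℕ) (hn : 1 ≤ n) (hs : 1 ≤ s) :
    (n.choose s : ℝ) ≤ Real.exp (s * (Real.log n + 1 - Real.log s)) := by
  have hn' : (0 : ℝ) < n := by exact_mod_cast hn
  have hs' : (0 : ℝ) < s := by exact_mod_cast hs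
  have h1 : (n.choose s : ℝ) ≤ (n : ℝ) ^ s / (s.factorial : ℝ) := Nat.choose_le_pow_div s n
  have h2 : (s : ℝ) ^ s / (s.factorial : ℝ) ≤ Real.exp s := Real.pow_div_factorial_le_exp (s : ℝ) hs'.le s
  have e : Real.exp (s * (Real.log n + 1 - Real.log s)) = (n : ℝ) ^ s * Real.exp s / (s : ℝ) ^ s := by
    rw [show (s : ℝ) * (Real.log n + 1 - Real.log s) = s * Real.log n + s - s * Real.log s by ring,
      Real.exp_sub, Real.exp_add, mul_comm (s : ℝ) (Real.log n), mul_comm (s : ℝ) (Real.log s),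
      Real.exp_mul, Real.exp_mul, Real.exp_log hn', Real.exp_log hs']
    simp
  rw [e]
  refine h1.trans ?_
  have hf : (0 : ℝ) < (s.factorial : ℝ) := by exact_mod_cast Nat.factorial_pos s
  rw [div_le_iff₀ hf] at h2
  rw [div_le_div_iff₀ hf (by positivity)]
  have hns : (0 : ℝ) < (n : ℝ) ^ s := by positivity
  nlinarith [mul_le_mul_of_nonneg_left h2 hns.le]

lemma term_bound (k n d m s : ℕ) (α r c : ℝ) (hc0 : 0 ≤ c) (hn : 1 ≤ n) (hs : 1 ≤ s)
    (hd : (n : ℝ) ^ α ≤ d) (hm : (m : ℝ) ≤ r * n * Real.log n) :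
    (n.choose s : ℝ) / (d : ℝ) ^ s * (1 + c * ((s : ℝ) / n) ^ k) ^ m ≤
    Real.exp (s * (Real.log n + 1 - Real.log s) - α * s * Real.log n +
      r * n * Real.log n * Real.log (1 + c * ((s : ℝ) / n) ^ k)) := by
  have hn' : (0 : ℝ) < n := by exact_mod_cast hn
  have hy : (1 : ℝ) ≤ 1 + c * ((s : ℝ) / n) ^ k := by
    have : 0 ≤ c * ((s : ℝ) / n) ^ k := by positivity
    linarith
  set y := 1 + c * ((s : ℝ) / n) ^ k
  rw [Real.exp_add, Real.exp_sub]
  have h1 := choose_exp n s hn hs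
  have h2 : Real.exp (α * s * Real.log n) ≤ (d : ℝ) ^ s := by
    rw [show α * s * Real.log n = Real.log n * α * s by ring, Real.exp_mul, Real.exp_mul,
      Real.exp_log hn', Real.rpow_natCast]
    exact pow_le_pow_left₀ (by positivity) hd s
  have h3 : y ^ m ≤ Real.exp (r * n * Real.log n * Real.log y) := by
    have : y ^ m = Real.exp (m * Real.log y) := by
      rw [mul_comm, Real.exp_mul, Real.exp_log (by linarith), Real.rpow_natCast]
    rw [this]
    apply Real.exp_le_exp.2
    exact mul_le_mul_of_nonneg_right hm (Real.log_nonneg hy)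
  apply mul_le_mul _ h3 (by positivity) (by positivity)
  exact div_le_div₀ (by positivity) h1 (by positivity) h2

open Filter Topology

lemma tail_bound (k : ℕ) (hk : 2 ≤ k) (α r c β : ℝ) (hr : 0 < r) (hc0 : 0 < c)
    (hc : c ≤ (k : ℝ) - 1) (hγ : r * Real.log (1 + c) < α) (hβ0 : 0 < β) (hβ : 1 - β < α) :
    ∀ᶠ n : ℕ in atTop, ∀ d m s : ℕ, (n : ℝ) ^ α ≤ d → (m : ℝ) ≤ r * n * Real.log n →
      (n : ℝ) ^ β < s → s ≤ n →
      (n.choose s : ℝ) / (d : ℝ) ^ s * (1 + c * ((s : ℝ) / n) ^ k) ^ m ≤ 1 / (n : ℝ) ^ 2 := by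
  obtain ⟨ε, hε0, hε1, hε⟩ : ∃ ε : ℝ, 0 < ε ∧ ε ≤ 1 ∧ r * c * ε ≤ (α - (1 - β)) / 2 := by
    refine ⟨min 1 ((α - (1 - β)) / 2 / (r * c)), ?_, min_le_left _ _, ?_⟩
    · apply lt_min one_pos
      have : 0 < α - (1 - β) := by linarith
      positivity
    · calc r * c * min 1 ((α - (1 - β)) / 2 / (r * c))
          ≤ r * c * ((α - (1 - β)) / 2 / (r * c)) := by
            apply mul_le_mul_of_nonneg_left (min_le_right _ _); positivity
        _ = _ := by field_simp
  set γ := r * Real.log (1 + c) with hγdef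
  obtain ⟨η, hη0, hη1, hη2⟩ : ∃ η : ℝ, 0 < η ∧ 2 * η ≤ (α - (1 - β)) / 2 ∧ 2 * η ≤ α - γ := by
    refine ⟨min ((α - (1 - β)) / 4) ((α - γ) / 2), ?_, ?_, ?_⟩
    · apply lt_min <;> linarith
    · linarith [min_le_left ((α - (1 - β)) / 4) ((α - γ) / 2)]
    · linarith [min_le_right ((α - (1 - β)) / 4) ((α - γ) / 2)]
  have hlog : Tendsto (fun n : ℕ => η * Real.log n) atTop atTop :=
    (Real.tendsto_log_atTop.comp tendsto_natCast_atTop_atTop).const_mul_atTop hη0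
  have hpow : Tendsto (fun n : ℕ => η * (n : ℝ) ^ β) atTop atTop :=
    ((tendsto_rpow_atTop hβ0).comp tendsto_natCast_atTop_atTop).const_mul_atTop hη0
  filter_upwards [eventually_ge_atTop 1, hlog.eventually_ge_atTop (1 - Real.log ε),
    hpow.eventually_ge_atTop 2] with n hn hL hP d m s hd hm hs hsn
  have hn' : (0 : ℝ) < n := by exact_mod_cast hn
  have hn1 : (1 : ℝ) ≤ n := by exact_mod_cast hn
  have hs1' : (1 : ℝ) < s := lt_of_le_of_lt (Real.one_le_rpow hn1 hβ0.le) hs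
  have hs1 : 1 ≤ s := by exact_mod_cast hs1'.le
  have hs0 : (0 : ℝ) < s := by linarith
  refine (term_bound k n d m s α r c hc0.le hn hs1 hd hm).trans ?_
  have hL0 : 0 ≤ Real.log n := Real.log_nonneg hn1
  have hlε : Real.log ε ≤ 0 := Real.log_nonpos hε0.le hε1
  set L := Real.log n with hLdef
  set x := (s : ℝ) / n with hx
  have hx0 : 0 < x := by positivity
  have hx1 : x ≤ 1 := by rw [hx, div_le_one hn']; exact_mod_cast hsn
  have hnx : n * x = s := by rw [hx]; field_simp
  have hlogs : Real.log s = L + Real.log x := by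
    rw [← hnx, Real.log_mul hn'.ne' hx0.ne']
  have hexp : s * (L + 1 - Real.log s) - α * s * L + r * n * L * Real.log (1 + c * x ^ k)
      ≤ - (η * s * L) := by
    rcases le_total x ε with h | h
    · have hl : Real.log (1 + c * x ^ k) ≤ c * ε * x := by
        have h1 : Real.log (1 + c * x ^ k) ≤ c * x ^ k := by
          have := Real.log_le_sub_one_of_pos (show 0 < 1 + c * x ^ k by positivity)
          linarith
        have h2 : x ^ k ≤ ε * x := by
          calc x ^ k ≤ x ^ 2 := pow_le_pow_of_le_one hx0.le hx1 hk
            _ = x * x := sq x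
            _ ≤ ε * x := by gcongr
        nlinarith
      have h1 : r * n * L * Real.log (1 + c * x ^ k) ≤ r * n * L * (c * ε * x) := by
        apply mul_le_mul_of_nonneg_left hl; positivity
      have h2 : r * n * L * (c * ε * x) = (r * c * ε) * (s * L) := by rw [← hnx]; ring
      have h3 : (r * c * ε) * (s * L) ≤ (α - (1 - β)) / 2 * (s * L) := by
        apply mul_le_mul_of_nonneg_right hε; positivity
      have h4 : β * L ≤ Real.log s := by
        rw [hLdef, ← Real.log_rpow hn']
        exact Real.log_le_log (by positivity) hs.le
      have h5 : s * (L + 1 - Real.log s) ≤ s * (L + η * L - β * L) := by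
        apply mul_le_mul_of_nonneg_left _ hs0.le; linarith
      have h6 : 2 * η * (s * L) ≤ (α - (1 - β)) / 2 * (s * L) := by
        apply mul_le_mul_of_nonneg_right hη1; positivity
      nlinarith
    · have hl := log_ineq k hk c x hc0.le hc hx0.le hx1
      have h1 : r * n * L * Real.log (1 + c * x ^ k) ≤ r * n * L * (x * Real.log (1 + c)) := by
        apply mul_le_mul_of_nonneg_left hl; positivity
      have h2 : r * n * L * (x * Real.log (1 + c)) = γ * (s * L) := by rw [← hnx, hγdef]; ring
      have h4 : Real.log ε ≤ Real.log x := Real.log_le_log hε0 h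
      have h5 : s * (L + 1 - Real.log s) ≤ s * (η * L) := by
        apply mul_le_mul_of_nonneg_left _ hs0.le; linarith
      have h6 : 2 * η * (s * L) ≤ (α - γ) * (s * L) := by
        apply mul_le_mul_of_nonneg_right hη2; positivity
      nlinarith
  refine (Real.exp_le_exp.2 hexp).trans ?_
  have h7 : 2 * L ≤ η * s * L := by
    apply mul_le_mul_of_nonneg_right _ hL0
    nlinarith
  calc Real.exp (-(η * s * L)) ≤ Real.exp (-(2 * L)) := Real.exp_le_exp.2 (by linarith)
    _ = 1 / (n : ℝ) ^ 2 := by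
      rw [Real.exp_neg, two_mul, Real.exp_add, hLdef, Real.exp_log hn', one_div, sq]

end RB
namespace RB

open Filter Topology

lemma dOf_ge (α : ℝ) (n : ℕ) : (n : ℝ) ^ α ≤ dOf α n := Nat.le_ceil _

lemma main_unsat (k : ℕ) (α r p : ℝ) (hα : 0 < α)
    (hp0 : 0 < p) (hp1 : p < 1) (h : α + r * Real.log (1 - p) < 0) :
    Tendsto (fun n : ℕ => prSatRB k α r p n) atTop (𝓝 0) := by
  obtain ⟨η, hη0, hη⟩ : ∃ η : ℝ, 0 < η ∧ α + r * Real.log (1 - p) = - (2 * η) :=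
    ⟨-(α + r * Real.log (1 - p)) / 2, by linarith, by ring⟩
  have hlog : Tendsto (fun n : ℕ => η * Real.log n) atTop atTop :=
    (Real.tendsto_log_atTop.comp tendsto_natCast_atTop_atTop).const_mul_atTop hη0
  have hlim : Tendsto (fun n : ℕ => Real.exp (-(n : ℝ))) atTop (𝓝 0) :=
    Real.tendsto_exp_neg_atTop_nhds_zero.comp tendsto_natCast_atTop_atTop
  refine tendsto_of_tendsto_of_tendsto_of_le_of_le' tendsto_const_nhds hlim
    (Eventually.of_forall fun n => prSat_nonneg _ _ _ _ _) ?_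
  filter_upwards [eventually_ge_atTop 1, eventually_ge_atTop k,
    hlog.eventually_ge_atTop (Real.log 2 + 1)] with n hn hk hL
  have hn' : (0 : ℝ) < n := by exact_mod_cast hn
  have hn1 : (1 : ℝ) ≤ n := by exact_mod_cast hn
  have hnα : 1 ≤ (n : ℝ) ^ α := Real.one_le_rpow hn1 hα.le
  unfold prSatRB
  have hd1 : (1 : ℝ) ≤ dOf α n := hnα.trans (dOf_ge α n)
  have hd2 : (dOf α n : ℝ) ≤ 2 * (n : ℝ) ^ α := by
    have := Nat.ceil_lt_add_one (show 0 ≤ (n : ℝ) ^ α by positivity)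
    unfold dOf
    linarith
  have hm : r * n * Real.log n ≤ mOf r n := Nat.le_ceil _
  set d := dOf α n
  set m := mOf r n
  have hd0 : 0 < d := by exact_mod_cast (by linarith : (0 : ℝ) < d)
  have hd0' : (0 : ℝ) < d := by linarith
  have hq1 : p * (d : ℝ) ^ k ≤ qOf p k d := Nat.le_ceil _
  have hq2 : qOf p k d ≤ d ^ k := by
    unfold qOf
    apply Nat.ceil_le.2
    push_cast
    have : (0 : ℝ) < (d : ℝ) ^ k := by positivity
    nlinarith
  refine (first_moment k n d _ m hd0 hk hq2).trans ?_
  have hw : 1 - (qOf p k d : ℝ) / (d : ℝ) ^ k ≤ 1 - p := by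
    have : p ≤ (qOf p k d : ℝ) / (d : ℝ) ^ k := by
      rw [le_div_iff₀ (by positivity)]; exact hq1
    linarith
  have hw0 : 0 ≤ 1 - (qOf p k d : ℝ) / (d : ℝ) ^ k := by
    rw [sub_nonneg, div_le_one (by positivity)]; exact_mod_cast hq2
  have h1p : 0 < 1 - p := by linarith
  calc (d : ℝ) ^ n * (1 - (qOf p k d : ℝ) / (d : ℝ) ^ k) ^ m
      ≤ (2 * (n : ℝ) ^ α) ^ n * (1 - p) ^ m := by gcongr
    _ = Real.exp (n * (Real.log 2 + α * Real.log n) + m * Real.log (1 - p)) := by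
        rw [Real.exp_add, mul_comm (n : ℝ), mul_comm (m : ℝ), Real.exp_mul, Real.exp_mul,
          Real.exp_add, Real.exp_log two_pos, Real.exp_log h1p, ← Real.log_rpow hn',
          Real.exp_log (by positivity), Real.rpow_natCast, Real.rpow_natCast]
    _ ≤ Real.exp (-(n : ℝ)) := by
        apply Real.exp_le_exp.2
        have hlp : Real.log (1 - p) < 0 := Real.log_neg h1p (by linarith)
        have h1 : m * Real.log (1 - p) ≤ r * n * Real.log n * Real.log (1 - p) :=
          mul_le_mul_of_nonpos_right hm hlp.le
        have h2 : r * n * Real.log n * Real.log (1 - p) =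
          n * Real.log n * (-(2 * η) - α) := by rw [← hη]; ring
        have h3 : n * (Real.log 2 + 1) ≤ n * (η * Real.log n) :=
          mul_le_mul_of_nonneg_left hL hn'.le
        have hL0 : 0 ≤ n * (η * Real.log n) := by
          have := Real.log_nonneg hn1
          positivity
        nlinarith

lemma main_sat (k : ℕ) (hk : 2 ≤ k) (α r r' p p1 : ℝ) (hα : 1 / (k : ℝ) < α) (hr : 0 < r)
    (hr' : r < r') (hp0 : 0 < p) (hpp : p < p1) (hp1 : p1 < 1)
    (hc : 1 / (1 - p1) ≤ k) (hγ : r' * Real.log (1 / (1 - p1)) < α) :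
    Tendsto (fun n : ℕ => prSatRB k α r p n) atTop (𝓝 1) := by
  classical
  have hk0 : (0 : ℝ) < k := by exact_mod_cast (by omega : 0 < k)
  have hα0 : 0 < α := lt_trans (by positivity) hα
  have h1p : 0 < 1 - p1 := by linarith
  obtain ⟨c, hcdef⟩ : ∃ c : ℝ, 1 + c = 1 / (1 - p1) := ⟨1 / (1 - p1) - 1, by ring⟩
  have hc0 : 0 < c := by
    have : 1 < 1 / (1 - p1) := by rw [lt_div_iff₀ h1p]; linarith
    linarith
  obtain ⟨β, hβa, hβb⟩ : ∃ β : ℝ, max 0 (1 - α) < β ∧ β < 1 - 1 / (k : ℝ) := by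
    apply exists_between
    apply max_lt
    · have : (1 : ℝ) / k < 1 := by
        rw [div_lt_one hk0]; exact_mod_cast (by omega : 1 < k)
      linarith
    · linarith
  have hβ0 : 0 < β := lt_of_le_of_lt (le_max_left _ _) hβa
  have hβ1 : 1 - β < α := by linarith [lt_of_le_of_lt (le_max_right 0 (1 - α)) hβa]
  have htail := tail_bound k hk α r' c β (hr.trans hr') hc0 (by linarith) (by rw [hcdef]; exact hγ)
    hβ0 hβ1
  obtain ⟨κ, hκ0, hκ⟩ : ∃ κ : ℝ, 0 < κ ∧ 1 + (β - 1) * k = -κ := by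
    refine ⟨-(1 + (β - 1) * k), ?_, by ring⟩
    have : (β - 1) * k < (-(1 / (k : ℝ))) * k := by
      apply mul_lt_mul_of_pos_right _ hk0; linarith
    have h2 : (-(1 / (k : ℝ))) * k = -1 := by field_simp
    linarith
  have hcast : Tendsto (fun n : ℕ => (n : ℝ)) atTop atTop := tendsto_natCast_atTop_atTop
  -- upper bound function
  have hU : Tendsto (fun n : ℕ => Real.exp (r' * c * (Real.log n / (n : ℝ) ^ κ)) +
      ((n : ℝ) + 1) / (n : ℝ) ^ 2) atTop (𝓝 1) := by
    have h1 : Tendsto (fun n : ℕ => Real.log n / (n : ℝ) ^ κ) atTop (𝓝 0) :=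
      ((isLittleO_log_rpow_atTop hκ0).tendsto_div_nhds_zero).comp hcast
    have h2 : Tendsto (fun n : ℕ => Real.exp (r' * c * (Real.log n / (n : ℝ) ^ κ))) atTop (𝓝 1) := by
      have := (Real.continuous_exp.tendsto _).comp (h1.const_mul (r' * c))
      simpa [Function.comp_def] using this
    have h3 : Tendsto (fun n : ℕ => ((n : ℝ) + 1) / (n : ℝ) ^ 2) atTop (𝓝 0) := by
      have hi : Tendsto (fun n : ℕ => ((n : ℝ))⁻¹) atTop (𝓝 0) := tendsto_inv_atTop_zero.comp hcast
      have h4 : Tendsto (fun n : ℕ => ((n : ℝ))⁻¹ + ((n : ℝ))⁻¹ * ((n : ℝ))⁻¹) atTop (𝓝 0) := by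
        simpa using hi.add (hi.mul hi)
      refine h4.congr' ?_
      filter_upwards [eventually_ge_atTop 1] with n hn
      have hn' : (0 : ℝ) < n := by exact_mod_cast hn
      field_simp
    simpa using h2.add h3
  have hUinv := hU.inv₀ one_ne_zero
  rw [inv_one] at hUinv
  refine tendsto_of_tendsto_of_tendsto_of_le_of_le' hUinv tendsto_const_nhds ?_
    (Eventually.of_forall fun n => prSat_le_one _ _ _ _ _)
  have hpow : Tendsto (fun n : ℕ => (n : ℝ) ^ α) atTop atTop :=
    (tendsto_rpow_atTop hα0).comp hcast
  have hlog : Tendsto (fun n : ℕ => (r' - r) * Real.log n) atTop atTop :=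
    (Real.tendsto_log_atTop.comp hcast).const_mul_atTop (by linarith)
  filter_upwards [eventually_ge_atTop 1, eventually_ge_atTop k, htail,
    hpow.eventually_ge_atTop 2, hpow.eventually_ge_atTop (1 / (p1 - p)),
    hlog.eventually_ge_atTop 1] with n hn hkn ht hd2 hdp hL
  have hn' : (0 : ℝ) < n := by exact_mod_cast hn
  have hn1 : (1 : ℝ) ≤ n := by exact_mod_cast hn
  have hL0 : 0 ≤ Real.log n := Real.log_nonneg hn1
  unfold prSatRB
  have hd := dOf_ge α n
  have hm : (mOf r n : ℝ) ≤ r' * n * Real.log n := by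
    have := Nat.ceil_lt_add_one (show 0 ≤ r * n * Real.log n by positivity)
    unfold mOf
    have h2 : 1 * 1 ≤ (n : ℝ) * ((r' - r) * Real.log n) := mul_le_mul hn1 hL (by norm_num) hn'.le
    nlinarith
  set d := dOf α n
  set m := mOf r n
  have hd2' : (2 : ℝ) ≤ d := hd2.trans hd
  have hd2n : 2 ≤ d := by exact_mod_cast hd2'
  have hd0 : (0 : ℝ) < d := by linarith
  have hDd : (d : ℝ) ≤ (d : ℝ) ^ k := le_self_pow₀ (by linarith) (by omega)
  have hD0 : (0 : ℝ) < (d : ℝ) ^ k := by positivity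
  have hq : (qOf p k d : ℝ) ≤ p1 * (d : ℝ) ^ k := by
    have := Nat.ceil_lt_add_one (show 0 ≤ p * (d : ℝ) ^ k by positivity)
    unfold qOf
    have h2 : 1 / (p1 - p) ≤ (d : ℝ) ^ k := hdp.trans (hd.trans hDd)
    rw [div_le_iff₀ (by linarith)] at h2
    nlinarith
  have hqD : qOf p k d < d ^ k := by
    have : (qOf p k d : ℝ) < (d : ℝ) ^ k := by nlinarith
    exact_mod_cast this
  have hw : 1 - p1 ≤ 1 - (qOf p k d : ℝ) / (d : ℝ) ^ k := by
    have : (qOf p k d : ℝ) / (d : ℝ) ^ k ≤ p1 := by rw [div_le_iff₀ hD0]; exact hq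
    linarith
  have hcw : 1 ≤ (1 + c) * (1 - (qOf p k d : ℝ) / (d : ℝ) ^ k) := by
    calc 1 = (1 + c) * (1 - p1) := by rw [hcdef]; field_simp
      _ ≤ _ := by gcongr
  have hsm := second_moment k n d (qOf p k d) m hd2n (by omega) hkn hqD c hc0.le hcw
    ((n : ℝ) ^ β) (by positivity)
  have hfirst : (1 + c * ((n : ℝ) ^ β / n) ^ k) ^ m ≤
      Real.exp (r' * c * (Real.log n / (n : ℝ) ^ κ)) := by
    have e1 : ((n : ℝ) ^ β / n) ^ k = (n : ℝ) ^ ((β - 1) * k) := by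
      rw [← Real.rpow_sub_one hn'.ne', ← Real.rpow_natCast, ← Real.rpow_mul hn'.le]
    have e2 : (n : ℝ) * (n : ℝ) ^ ((β - 1) * k) = 1 / (n : ℝ) ^ κ := by
      rw [one_div, ← Real.rpow_neg hn'.le, ← hκ, Real.rpow_add hn', Real.rpow_one]
    rw [e1]
    set z := (n : ℝ) ^ ((β - 1) * k)
    have hz : 0 < z := by positivity
    calc (1 + c * z) ^ m ≤ (Real.exp (c * z)) ^ m := by
          apply pow_le_pow_left₀ (by positivity)
          linarith [Real.add_one_le_exp (c * z)]
      _ = Real.exp (m * (c * z)) := by rw [← Real.exp_nat_mul]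
      _ ≤ Real.exp (r' * n * Real.log n * (c * z)) := by
          apply Real.exp_le_exp.2
          gcongr
      _ = _ := by
          congr 1
          rw [show r' * n * Real.log n * (c * z) = r' * c * (Real.log n * (n * z)) by ring, e2]
          ring
  have hsecond : (∑ s ∈ Finset.range (n + 1), if (n : ℝ) ^ β < s then
        (n.choose s : ℝ) / (d : ℝ) ^ s * (1 + c * ((s : ℝ) / n) ^ k) ^ m else 0) ≤
      ((n : ℝ) + 1) / (n : ℝ) ^ 2 := by
    calc _ ≤ ∑ s ∈ Finset.range (n + 1), 1 / (n : ℝ) ^ 2 := by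
          refine Finset.sum_le_sum fun s hs => ?_
          split_ifs with h
          · exact ht d m s hd hm h (by rw [Finset.mem_range] at hs; omega)
          · positivity
      _ = _ := by
          rw [Finset.sum_const, Finset.card_range, nsmul_eq_mul]
          push_cast
          ring
  rw [inv_le_iff_one_le_mul₀ (by positivity)]
  refine hsm.trans ?_
  apply mul_le_mul_of_nonneg_left _ (prSat_nonneg _ _ _ _ _)
  exact add_le_add hfirst hsecond

end RB

open Filter Topology

/-- **Phase transition of model RB in the tightness `p`** (Theorem 2):
for an integer `k ≥ 2` and real constants `α > 1/k` and `r > 0` such that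
`p_cr := 1 - e^(-α/r)` satisfies `p_cr ≤ (k-1)/k`, the probability that a random
instance of `RB(k,n,α,r,p)` with constant `p ∈ (0,1)` is satisfiable tends,
as `n → ∞`, to `1` if `p < p_cr` and to `0` if `p > p_cr`. -/
theorem rb_phase_transition_in_p (k : ℕ) (hk : 2 ≤ k) (α r : ℝ)
    (hα : 1 / (k : ℝ) < α) (hr : 0 < r)
    (hpcr : 1 - Real.exp (-α / r) ≤ ((k : ℝ) - 1) / k)
    (p : ℝ) (hp0 : 0 < p) (hp1 : p < 1) :
    (p < 1 - Real.exp (-α / r) →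
      Tendsto (fun n : ℕ => RB.prSatRB k α r p n) atTop (𝓝 1)) ∧
    (1 - Real.exp (-α / r) < p →
      Tendsto (fun n : ℕ => RB.prSatRB k α r p n) atTop (𝓝 0)) := by
  have hk0 : (0 : ℝ) < k := by exact_mod_cast (by omega : 0 < k)
  have hα0 : 0 < α := lt_trans (by positivity) hα
  constructor
  · intro h
    obtain ⟨p1, hpp, hp1c⟩ := exists_between h
    have hp11 : p1 < 1 := by linarith [Real.exp_pos (-α / r)]
    have h1p : 0 < 1 - p1 := by linarith
    have hlog : -α / r < Real.log (1 - p1) := by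
      rw [Real.lt_log_iff_exp_lt h1p]
      linarith
    rw [div_lt_iff₀ hr] at hlog
    have hlneg : 0 < Real.log (1 / (1 - p1)) := by
      apply Real.log_pos
      rw [lt_div_iff₀ h1p]; linarith
    have hle : Real.log (1 / (1 - p1)) = - Real.log (1 - p1) := by
      rw [one_div, Real.log_inv]
    obtain ⟨r', hr1, hr2⟩ := exists_between
      (show r < α / Real.log (1 / (1 - p1)) by
        rw [lt_div_iff₀ hlneg, hle]; linarith)
    refine RB.main_sat k hk α r r' p p1 hα hr hr1 hp0 hpp hp11 ?_ ?_
    · rw [div_le_iff₀ h1p]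
      have h2 : p1 ≤ ((k : ℝ) - 1) / k := hp1c.le.trans hpcr
      rw [le_div_iff₀ hk0] at h2
      linarith
    · rwa [lt_div_iff₀ hlneg] at hr2
  · intro h
    refine RB.main_unsat k α r p hα0 hp0 hp1 ?_
    have h1p : 0 < 1 - p := by linarith
    have hlog : Real.log (1 - p) < -α / r := by
      rw [Real.log_lt_iff_lt_exp h1p]
      linarith
    rw [lt_div_iff₀ hr] at hlog
    linarith
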